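/- Let Σ be an alphabet with at least two distinct elements, let I be a finite index set, and for each i ∈ I let u_i and v_i be words over Σ. Then there exists a word w over Σ such that for every i ∈ I and every n ∈ ℕ, w is not a prefix of u_i ++ v_i^n. -/

import Mathlib

/-- The `n`-fold concatenation of a word with itself. -/
def wordPow {α : Type*} (u : List α) (n : ℕ) : List α :=
  (List.replicate n u).flatten

theorem wordPow_add {α : Type*} (v : List α) (m n : ℕ) :
    wordPow v (m + n) = wordPow v m ++ wordPow v n := by
  simp only [wordPow, ← List.replicate_append_replicate, List.flatten_append]

theorem append_wordPow_prefix {α : Type*} (u v : List α) {m n : ℕ} (h : m ≤ n) :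
    u ++ wordPow v m <+: u ++ wordPow v n := by
  obtain ⟨k, rfl⟩ := Nat.exists_eq_add_of_le h
  exact ⟨wordPow v k, by rw [wordPow_add, List.append_assoc]⟩

/-- The prefixes of the words `u ++ v ^ n` form a chain, so at most one letter can extend a given
word to such a prefix. -/
theorem exists_extension_not_prefix {α : Type*} {a b : α} (hab : a ≠ b) (p u v : List α) :
    ∃ c : α, ∀ n : ℕ, ¬ p ++ [c] <+: u ++ wordPow v n := by
  by_contra! h
  obtain ⟨m, hm⟩ := h a
  obtain ⟨n, hn⟩ := h b
  have hm' := hm.trans (append_wordPow_prefix u v (le_max_left m n))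
  have hn' := hn.trans (append_wordPow_prefix u v (le_max_right m n))
  have heq := (List.prefix_of_prefix_length_le hm' hn' (by simp)).eq_of_length (by simp)
  exact hab (by simpa using heq)

/-- Over an alphabet with at least two letters, given finitely many pairs of
words `(u_i, v_i)`, there is a word `w` that is not a prefix of any
`u_i ++ v_i^n`. -/
theorem stmt_5 {α : Type*} (hα : ∃ a b : α, a ≠ b)
    {ι : Type*} [Fintype ι] (u v : ι → List α) :
    ∃ w : List α, ∀ (i : ι) (n : ℕ), ¬ w <+: (u i ++ wordPow (v i) n) := by
  classical
  obtain ⟨a, b, hab⟩ := hα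
  suffices h : ∀ s : Finset ι, ∃ w : List α, ∀ i ∈ s, ∀ n : ℕ,
      ¬ w <+: (u i ++ wordPow (v i) n) by
    simpa using h Finset.univ
  intro s
  induction s using Finset.induction_on with
  | empty => simp
  | insert j s _ ih =>
    obtain ⟨w, hw⟩ := ih
    obtain ⟨c, hc⟩ := exists_extension_not_prefix hab w (u j) (v j)
    refine ⟨w ++ [c], fun i hi n hpre => ?_⟩
    rcases Finset.mem_insert.mp hi with rfl | hi
    · exact hc n hpre
    · exact hw i hi n ((List.prefix_append w [c]).trans hpre)
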